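/- Let A be an aperiodic N×N 0–1 matrix, Σ_A^+ the associated one-sided subshift of finite type with shift σ and metric d_θ, m a σ-invariant Markov measure on Σ_A^+, and F(x,z) = (σ(x), G(x,z)) a skew product on Σ_A^+ × K satisfying (G1). Assume the Perron–Frobenius operator P_σ of σ with respect to m has spectral gap on the space of d_θ-Lipschitz functions. Then F admits exactly one invariant probability measure μ₀ belonging to S^∞; moreover ‖μ₀‖_∞ = 1 and ‖μ₀‖_{S^∞} = 2. -/

import Mathlib

open MeasureTheory ENNReal Set

namespace RDS

/-- The one-sided subshift of finite type `Σ_A^+` determined by the 0-1 matrix `A`. -/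
abbrev SigmaA (N : ℕ) (A : Fin N → Fin N → Bool) :=
  {x : ℕ → Fin N // ∀ i, A (x i) (x (i + 1)) = true}

variable {N : ℕ} {A : Fin N → Fin N → Bool}

/-- The shift map `σ` on `Σ_A^+`. -/
def shift (x : SigmaA N A) : SigmaA N A :=
  ⟨fun i => x.val (i + 1), fun i => x.prop (i + 1)⟩

/-- Aperiodicity of a 0-1 matrix: some power has all entries positive. -/
def Aperiodic (A : Fin N → Fin N → Bool) : Prop :=
  ∃ k : ℕ, 0 < k ∧ ∀ i j,
    0 < ((Matrix.of fun a b => if A a b then (1 : ℕ) else 0) ^ k) i j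

/-- The metric `d_θ(x,y) = Σ_i θ^i (1 - δ(x_i, y_i))` on `Σ_A^+`. -/
noncomputable def dTheta (θ : ℝ) (x y : SigmaA N A) : ℝ :=
  ∑' i : ℕ, θ ^ i * (if x.val i = y.val i then (0 : ℝ) else 1)

/-- Cylinder sets of `Σ_A^+`. -/
def cylinder (n : ℕ) (w : Fin (n + 1) → Fin N) : Set (SigmaA N A) :=
  {x | ∀ i : Fin (n + 1), x.val i = w i}

/-- `m` is a Markov measure on `Σ_A^+` compatible with `A`: it is given on
cylinders by a stochastic matrix `P` (vanishing where `A` vanishes) and a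
stationary probability vector `p`. -/
def IsMarkov (m : Measure (SigmaA N A)) : Prop :=
  ∃ (p : Fin N → ℝ≥0∞) (P : Fin N → Fin N → ℝ≥0∞),
    (∑ i, p i = 1) ∧ (∀ i, ∑ j, P i j = 1) ∧ (∀ j, ∑ i, p i * P i j = p j) ∧
    (∀ i j, A i j = false → P i j = 0) ∧
    ∀ (n : ℕ) (w : Fin (n + 1) → Fin N),
      m (cylinder n w) = p (w 0) * ∏ i : Fin n, P (w i.castSucc) (w i.succ)

/-- `σ_i⁻¹(γ)`: the sequence `γ` with the symbol `i` prepended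
(defined when `A i γ₀ = 1`), i.e. the inverse branch of the restriction `σ_i`
of `σ` to the cylinder `[i]`. -/
def prepend (i : Fin N) (x : SigmaA N A) (h : A i (x.val 0) = true) : SigmaA N A :=
  ⟨fun n => match n with
    | 0 => i
    | Nat.succ k => x.val k,
   fun j => match j with
    | 0 => h
    | Nat.succ k => x.prop k⟩

/-- `f` is `L`-Lipschitz with respect to the distance function `d`. -/
def LipWithD {X : Type*} (d : X → X → ℝ) (L : ℝ) (f : X → ℝ) : Prop :=
  ∀ x y, |f x - f y| ≤ L * d x y

/-- `f` is Lipschitz with respect to the distance function `d`. -/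
def LipD {X : Type*} (d : X → X → ℝ) (f : X → ℝ) : Prop :=
  ∃ L : ℝ, LipWithD d L f

/-- The best Lipschitz constant of `f` with respect to `d` (valued in `ℝ≥0∞`). -/
noncomputable def lipConst {X : Type*} (d : X → X → ℝ) (f : X → ℝ) : ℝ≥0∞ :=
  ⨆ (x : X) (y : X), ENNReal.ofReal (|f x - f y| / d x y)

/-- The sup norm of `f` (valued in `ℝ≥0∞`). -/
noncomputable def supNormE {X : Type*} (f : X → ℝ) : ℝ≥0∞ :=
  ⨆ x : X, ENNReal.ofReal |f x|

/-- The norm `‖f‖_θ = ‖f‖_∞ + Lip_d(f)`. -/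
noncomputable def thetaNorm {X : Type*} (d : X → X → ℝ) (f : X → ℝ) : ℝ≥0∞ :=
  supNormE f + lipConst d f

/-- The Perron-Frobenius operator duality characterizing `P_σ`:
`∫ P_σ(φ) · ψ dm = ∫ φ · (ψ ∘ σ) dm` for integrable `φ` and bounded measurable `ψ`. -/
def IsPerronFrobenius (m : Measure (SigmaA N A))
    (Pσ : (SigmaA N A → ℝ) → SigmaA N A → ℝ) : Prop :=
  ∀ φ ψ : SigmaA N A → ℝ, Integrable φ m → Measurable ψ → (∃ C, ∀ x, |ψ x| ≤ C) →
    ∫ x, Pσ φ x * ψ x ∂m = ∫ x, φ x * ψ (shift x) ∂m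

/-- Spectral gap for `P_σ` on `d_θ`-Lipschitz functions with constants `D`, `r`:
`‖P_σ^n φ‖_θ ≤ D r^n ‖φ‖_θ` for all `n` and all `d_θ`-Lipschitz `φ` with
`∫ φ dm = 0`. -/
def HasGap (m : Measure (SigmaA N A)) (θ : ℝ)
    (Pσ : (SigmaA N A → ℝ) → SigmaA N A → ℝ) (D r : ℝ) : Prop :=
  ∀ φ : SigmaA N A → ℝ, LipD (dTheta θ) φ → (∫ x, φ x ∂m) = 0 →
    ∀ n : ℕ, thetaNorm (dTheta θ) (Pσ^[n] φ) ≤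
      ENNReal.ofReal (D * r ^ n) * thetaNorm (dTheta θ) φ

/-- `Jm i` is the Jacobian `J_{m,σ_i}` of `m` with respect to the branch `σ_i`
(the restriction of `σ` to the cylinder `[i]`): `m (σ_i(E)) = ∫_E J_{m,σ_i} dm`
for every measurable `E` (intersected with `[i]`). -/
def IsJacobian (m : Measure (SigmaA N A)) (Jm : Fin N → SigmaA N A → ℝ) : Prop :=
  ∀ (i : Fin N) (E : Set (SigmaA N A)), MeasurableSet E →
    m {γ : SigmaA N A | ∃ h : A i (γ.val 0) = true, prepend i γ h ∈ E} =
      ∫⁻ x in E ∩ {x : SigmaA N A | x.val 0 = i}, ENNReal.ofReal (Jm i x) ∂m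

variable {K : Type*} [MetricSpace K] [MeasurableSpace K]

/-- The Wasserstein-Kantorovich like distance `W(ν₁,ν₂)`: the supremum of
`|∫ g dν₁ - ∫ g dν₂|` over `g : K → ℝ` with `Lip(g) ≤ 1` and `‖g‖_∞ ≤ 1`.
Applied with `ν₂ = 0` it gives the norm `‖ν₁‖_W`; applied to the two parts of a
decomposition of a signed measure it gives its `‖·‖_W` norm. -/
noncomputable def wDist (ν₁ ν₂ : Measure K) : ℝ≥0∞ :=
  ⨆ g : {g : K → ℝ // LipschitzWith 1 g ∧ ∀ z, |g z| ≤ 1},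
    ENNReal.ofReal |∫ z, g.val z ∂ν₁ - ∫ z, g.val z ∂ν₂|

/-- The skew product `F(x,z) = (σ(x), G(x,z))`. -/
def skew (G : SigmaA N A × K → K) (p : SigmaA N A × K) : SigmaA N A × K :=
  (shift p.1, G p)

/-- The transfer operator `F^* μ (E) = μ (F⁻¹ E)` acting on signed measures. -/
noncomputable def transfer (G : SigmaA N A × K → K)
    (μ : SignedMeasure (SigmaA N A × K)) : SignedMeasure (SigmaA N A × K) :=
  μ.map (skew G)

/-- Condition (G1): uniform contraction of the vertical fibers with rate `α`. -/
def CondG1 (G : SigmaA N A × K → K) (α : ℝ) : Prop :=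
  ∀ (x : SigmaA N A) (z₁ z₂ : K), dist (G (x, z₁)) (G (x, z₂)) ≤ α * dist z₁ z₂

/-- Condition (G2): `x ↦ G(x,z)` is `d_θ`-Lipschitz with constant `H`,
uniformly in `z`. -/
def CondG2 (θ : ℝ) (G : SigmaA N A × K → K) (H : ℝ) : Prop :=
  ∀ (z : K) (x y : SigmaA N A), dist (G (x, z)) (G (y, z)) ≤ H * dTheta θ x y

/-- `T` is (the path `γ ↦ μ|_γ` of) a disintegration of `μ` along the vertical
fibers, over the reference measure `m`: `μ(E) = ∫ (μ|_γ)(E ∩ γ) dm(γ)`. -/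
def IsDisint (m : Measure (SigmaA N A)) (μ : Measure (SigmaA N A × K))
    (T : SigmaA N A → Measure K) : Prop :=
  (∀ E : Set (SigmaA N A × K), MeasurableSet E →
      μ E = ∫⁻ γ, T γ {z | (γ, z) ∈ E} ∂m) ∧
  ∀ E : Set K, MeasurableSet E → Measurable fun γ => T γ E

/-- The (essential) `‖·‖_W`-Lipschitz constant of a path of measures,
`|Γ|_θ^ω = ess sup_{γ₁ ≠ γ₂} ‖Γ(γ₁) - Γ(γ₂)‖_W / d_θ(γ₁,γ₂)`. -/
noncomputable def pathLip (m : Measure (SigmaA N A)) (θ : ℝ)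
    (T : SigmaA N A → Measure K) : ℝ≥0∞ :=
  essSup (fun p : SigmaA N A × SigmaA N A =>
    wDist (T p.1) (T p.2) / ENNReal.ofReal (dTheta θ p.1 p.2)) (m.prod m)

/-- The Lipschitz constant `|μ|_θ` of a positive measure: the infimum over
disintegrations `ω` of `μ` of `|μ|_θ^ω`. -/
noncomputable def lipDisint (m : Measure (SigmaA N A)) (θ : ℝ)
    (μ : Measure (SigmaA N A × K)) : ℝ≥0∞ :=
  ⨅ T : {T : SigmaA N A → Measure K // IsDisint m μ T}, pathLip m θ T.val

/-- The fiberwise transfer formula: the path representing `F^*μ` induced by the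
path `T` representing `μ`, i.e.
`γ ↦ Σ_i 1_{σ([i])}(γ) (F_{iγ})_*(T(iγ)) / J_{m,σ_i}(iγ)`. -/
noncomputable def transferPath (G : SigmaA N A × K → K) (Jm : Fin N → SigmaA N A → ℝ)
    (T : SigmaA N A → Measure K) : SigmaA N A → Measure K :=
  fun γ => ∑ i : Fin N, if h : A i (γ.val 0) = true then
      ENNReal.ofReal ((Jm i (prepend i γ h))⁻¹) •
        ((T (prepend i γ h)).map fun z => G (prepend i γ h, z))
    else 0

variable [BorelSpace K] [CompactSpace K] [Nonempty K]

/-- The fiberwise restriction `μ|_γ = π₂_* (φ₁(γ) μ_γ)` of a finite positive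
measure `μ` on `Σ_A^+ × K`, where `({μ_γ}_γ, φ₁ m)` is the Rokhlin
disintegration of `μ` along the vertical fibers and `φ₁ = d(π₁_*μ)/dm`. -/
noncomputable def fiberR (m : Measure (SigmaA N A))
    (μ : Measure (SigmaA N A × K)) (γ : SigmaA N A) : Measure K := by
  by_cases h : IsFiniteMeasure μ
  · haveI := h
    exact (μ.fst.rnDeriv m γ) • μ.condKernel γ
  · exact 0

/-- The norm `‖μ‖_∞ = ess sup_γ ‖μ|_γ‖_W` of a signed measure written as a
difference `μ = μ₁ - μ₂` of positive measures. -/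
noncomputable def infNormPair (m : Measure (SigmaA N A))
    (μ₁ μ₂ : Measure (SigmaA N A × K)) : ℝ≥0∞ :=
  essSup (fun γ => wDist (fiberR m μ₁ γ) (fiberR m μ₂ γ)) m

/-- The marginal density `φ₁ = d(π₁_*μ)/dm` of the signed measure `μ = μ₁ - μ₂`. -/
noncomputable def phiPair (m : Measure (SigmaA N A))
    (μ₁ μ₂ : Measure (SigmaA N A × K)) (γ : SigmaA N A) : ℝ :=
  (μ₁.fst.rnDeriv m γ).toReal - (μ₂.fst.rnDeriv m γ).toReal

/-- Membership in `AB`: both parts are finite with first marginal absolutely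
continuous with respect to `m`. -/
def MemABPair (m : Measure (SigmaA N A)) (μ₁ μ₂ : Measure (SigmaA N A × K)) : Prop :=
  μ₁.fst ≪ m ∧ μ₂.fst ≪ m ∧ IsFiniteMeasure μ₁ ∧ IsFiniteMeasure μ₂

/-- Membership in `S^∞`: `μ ∈ AB`, `‖μ‖_∞ < ∞` and the marginal density `φ₁`
has a `d_θ`-Lipschitz version. -/
def MemSPair (m : Measure (SigmaA N A)) (θ : ℝ)
    (μ₁ μ₂ : Measure (SigmaA N A × K)) : Prop :=
  MemABPair m μ₁ μ₂ ∧ infNormPair m μ₁ μ₂ < ⊤ ∧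
    ∃ ψ : SigmaA N A → ℝ, ψ =ᵐ[m] phiPair m μ₁ μ₂ ∧ LipD (dTheta θ) ψ

/-- `‖φ₁‖_θ`, computed on the best version of the marginal density. -/
noncomputable def thetaNormMu (m : Measure (SigmaA N A)) (θ : ℝ)
    (μ₁ μ₂ : Measure (SigmaA N A × K)) : ℝ≥0∞ :=
  ⨅ ψ : {ψ : SigmaA N A → ℝ // ψ =ᵐ[m] phiPair m μ₁ μ₂}, thetaNorm (dTheta θ) ψ.val

/-- The norm `‖μ‖_{S^∞} = ‖φ₁‖_θ + ‖μ‖_∞`. -/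
noncomputable def sNormPair (m : Measure (SigmaA N A)) (θ : ℝ)
    (μ₁ μ₂ : Measure (SigmaA N A × K)) : ℝ≥0∞ :=
  thetaNormMu m θ μ₁ μ₂ + infNormPair m μ₁ μ₂

/-- Positive part of a signed measure. -/
noncomputable def jPos {X : Type*} [MeasurableSpace X] (μ : SignedMeasure X) : Measure X :=
  μ.toJordanDecomposition.posPart

/-- Negative part of a signed measure. -/
noncomputable def jNeg {X : Type*} [MeasurableSpace X] (μ : SignedMeasure X) : Measure X :=
  μ.toJordanDecomposition.negPart

/-- Membership in `AB` for signed measures. -/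
def MemAB (m : Measure (SigmaA N A)) (μ : SignedMeasure (SigmaA N A × K)) : Prop :=
  MemABPair m (jPos μ) (jNeg μ)

/-- Membership in `S^∞` for signed measures. -/
def MemS (m : Measure (SigmaA N A)) (θ : ℝ) (μ : SignedMeasure (SigmaA N A × K)) : Prop :=
  MemSPair m θ (jPos μ) (jNeg μ)

/-- `‖μ‖_∞` for signed measures. -/
noncomputable def infNorm (m : Measure (SigmaA N A))
    (μ : SignedMeasure (SigmaA N A × K)) : ℝ≥0∞ :=
  infNormPair m (jPos μ) (jNeg μ)

/-- `‖μ‖_{S^∞}` for signed measures. -/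
noncomputable def sNorm (m : Measure (SigmaA N A)) (θ : ℝ)
    (μ : SignedMeasure (SigmaA N A × K)) : ℝ≥0∞ :=
  sNormPair m θ (jPos μ) (jNeg μ)

/-- `‖φ₁‖_∞` of the marginal density of a signed measure. -/
noncomputable def phiSup (m : Measure (SigmaA N A))
    (μ : SignedMeasure (SigmaA N A × K)) : ℝ≥0∞ :=
  essSup (fun γ => ENNReal.ofReal |phiPair m (jPos μ) (jNeg μ) γ|) m

section General
open Filter Topology BoundedContinuousFunction

/-- Prokhorov step: measures on `X × K` with fixed first marginal accumulate. -/
theorem exists_weak_limit {X K : Type*} [TopologicalSpace X] [PolishSpace X] [MeasurableSpace X]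
    [BorelSpace X] [MetricSpace K] [CompactSpace K] [MeasurableSpace K] [BorelSpace K]
    (m : Measure X) [IsProbabilityMeasure m] (ν : ℕ → ProbabilityMeasure (X × K))
    (hν : ∀ n, (ν n : Measure (X × K)).fst = m) :
    ∃ (U : Ultrafilter ℕ) (μ : ProbabilityMeasure (X × K)), (U : Filter ℕ) ≤ atTop ∧
      Tendsto ν U (𝓝 μ) := by
  have tight : IsTightMeasureSet {((μ : ProbabilityMeasure (X × K)) : Measure (X × K)) |
      μ ∈ Set.range ν} := by
    rw [isTightMeasureSet_iff_exists_isCompact_measure_compl_le]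
    intro ε hε
    obtain ⟨C, hC, hCm⟩ := (isTightMeasureSet_iff_exists_isCompact_measure_compl_le.1
      (isTightMeasureSet_singleton (μ := m))) ε hε
    refine ⟨C ×ˢ univ, hC.prod isCompact_univ, ?_⟩
    rintro _ ⟨_, ⟨n, rfl⟩, rfl⟩
    have h1 : (C ×ˢ (univ : Set K))ᶜ = Prod.fst ⁻¹' Cᶜ := by
      ext ⟨x, z⟩; simp
    have := hCm m rfl
    rw [← hν n, Measure.fst_apply hC.isClosed.measurableSet.compl] at this
    rw [h1]
    exact this
  have hc := isCompact_closure_of_isTightMeasureSet tight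
  obtain ⟨μ, -, hμ⟩ := hc.ultrafilter_le_nhds ((hyperfilter ℕ).map ν)
    (by
      rw [le_principal_iff]
      exact mem_of_superset (range_mem_map : range ν ∈ (hyperfilter ℕ : Filter ℕ).map ν)
        subset_closure)
  exact ⟨hyperfilter ℕ, μ, by rw [← Nat.cofinite_eq_atTop]; exact hyperfilter_le_cofinite, hμ⟩

theorem exists_map_eq {X X₀ K : Type*} [TopologicalSpace X] [PolishSpace X] [MeasurableSpace X]
    [BorelSpace X] [TopologicalSpace X₀] [PolishSpace X₀] [MeasurableSpace X₀]
    [BorelSpace X₀] [MetricSpace K] [CompactSpace K] [MeasurableSpace K] [BorelSpace K]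
    (m : Measure X) [IsProbabilityMeasure m] (ν : ℕ → ProbabilityMeasure (X × K))
    (hν : ∀ n, (ν n : Measure (X × K)).fst = m)
    (ι s : X → X₀) (hι : Continuous ι) (hs : Continuous s) (G : X × K → K) (hG : Continuous G)
    (h : ∀ g : (X₀ × K) →ᵇ ℝ, Tendsto (fun n => ∫ p, g (s p.1, G p) ∂(ν n : Measure (X × K))
      - ∫ p, g (ι p.1, p.2) ∂(ν n : Measure (X × K))) atTop (𝓝 0)) :
    ∃ μ : Measure (X × K), IsProbabilityMeasure μ ∧ μ.fst = m ∧
      μ.map (fun p => (s p.1, G p)) = μ.map (fun p => (ι p.1, p.2)) := by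
  obtain ⟨U, μ, hU, hlim⟩ := exists_weak_limit m ν hν
  rw [ProbabilityMeasure.tendsto_iff_forall_integral_tendsto] at hlim
  have c1 : Continuous (fun p : X × K => (s p.1, G p)) := by fun_prop
  have c2 : Continuous (fun p : X × K => (ι p.1, p.2)) := by fun_prop
  refine ⟨μ, inferInstance, ?_, ?_⟩
  · have : IsFiniteMeasure (μ : Measure (X × K)).fst := inferInstance
    apply ext_of_forall_integral_eq_of_IsFiniteMeasure
    intro f
    have h1 := hlim (f.compContinuous ⟨Prod.fst, continuous_fst⟩)
    have h2 : ∀ ρ : Measure (X × K), ∫ x, f x ∂ρ.fst = ∫ p, f p.1 ∂ρ := fun ρ => by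
      rw [Measure.fst, integral_map measurable_fst.aemeasurable
        f.continuous.aestronglyMeasurable]
    simp only [compContinuous_apply, ContinuousMap.coe_mk, ← h2, hν] at h1
    exact tendsto_nhds_unique h1 tendsto_const_nhds
  · have := Measure.isFiniteMeasure_map (μ : Measure (X × K)) (fun p : X × K => (s p.1, G p))
    have := Measure.isFiniteMeasure_map (μ : Measure (X × K)) (fun p : X × K => (ι p.1, p.2))
    apply ext_of_forall_integral_eq_of_IsFiniteMeasure
    intro g
    rw [integral_map c1.measurable.aemeasurable g.continuous.aestronglyMeasurable,
      integral_map c2.measurable.aemeasurable g.continuous.aestronglyMeasurable]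
    have h1 := hlim (g.compContinuous ⟨_, c1⟩)
    have h2 := hlim (g.compContinuous ⟨_, c2⟩)
    have h3 := tendsto_nhds_unique (h1.sub h2) ((h g).mono_left hU)
    simp only [compContinuous_apply, ContinuousMap.coe_mk] at h3
    linarith

/-- Krylov–Bogoliubov for skew products that are continuous on the fibres. -/
theorem exists_invariant {X K : Type*} [t : TopologicalSpace X] [PolishSpace X] [MeasurableSpace X]
    [BorelSpace X] [MetricSpace K] [CompactSpace K] [Nonempty K] [MeasurableSpace K] [BorelSpace K]
    (m : Measure X) [IsProbabilityMeasure m] (s : X → X) (hs : Continuous s) (hm : m.map s = m)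
    (G : X × K → K) (hG : Measurable G)
    (hLip : ∀ x z₁ z₂, dist (G (x, z₁)) (G (x, z₂)) ≤ dist z₁ z₂) :
    ∃ μ : Measure (X × K), IsProbabilityMeasure μ ∧ μ.fst = m ∧
      μ.map (fun p => (s p.1, G p)) = μ := by
  obtain ⟨F, hF⟩ : ∃ F : X × K → X × K, F = fun p => (s p.1, G p) := ⟨_, rfl⟩
  have hFm : Measurable F := by rw [hF]; exact (hs.measurable.comp measurable_fst).prodMk hG
  obtain ⟨z₀⟩ := ‹Nonempty K›
  have : Nonempty K := ⟨z₀⟩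
  let ρ : ℕ → Measure (X × K) := fun k => (m.map (fun x => (x, z₀))).map F^[k]
  have hρp : ∀ k, IsProbabilityMeasure (ρ k) := fun k => by
    have : IsProbabilityMeasure (m.map (fun x => (x, z₀))) :=
      Measure.isProbabilityMeasure_map (by fun_prop)
    exact Measure.isProbabilityMeasure_map (hFm.iterate k).aemeasurable
  have hρs : ∀ k, (ρ k).map F = ρ (k + 1) := fun k => by
    simp only [ρ]
    rw [Measure.map_map hFm (hFm.iterate k), Function.iterate_succ']
  have hρf : ∀ k, (ρ k).fst = m := by
    intro k
    induction k with
    | zero =>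
      simp only [ρ, Function.iterate_zero, Measure.map_id]
      rw [Measure.fst, Measure.map_map measurable_fst (by fun_prop)]
      exact Measure.map_id
    | succ k ih =>
      rw [← hρs, Measure.fst, Measure.map_map measurable_fst hFm]
      have : Prod.fst ∘ F = s ∘ Prod.fst := by rw [hF]; rfl
      rw [this, ← Measure.map_map hs.measurable measurable_fst]
      change (ρ k).fst.map s = m
      rw [ih, hm]
  let c : ℕ → ℝ≥0∞ := fun n => ((n : ℝ≥0∞) + 1)⁻¹
  have hc1 : ∀ n, c n * ((n : ℝ≥0∞) + 1) = 1 := fun n =>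
    ENNReal.inv_mul_cancel (by simp) (by finiteness)
  let ν : ℕ → Measure (X × K) := fun n => c n • ∑ k ∈ Finset.range (n + 1), ρ k
  have hνf : ∀ n, (ν n).fst = m := by
    intro n
    ext E hE
    simp only [ν]
    rw [Measure.fst_apply hE, Measure.smul_apply, Measure.finsetSum_apply]
    have : ∀ k ∈ Finset.range (n+1), ρ k (Prod.fst ⁻¹' E) = m E := fun k _ => by
      rw [← Measure.fst_apply hE, hρf]
    rw [Finset.sum_congr rfl this]
    simp only [Finset.sum_const, Finset.card_range, nsmul_eq_mul, smul_eq_mul, Nat.cast_add, Nat.cast_one]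
    rw [← mul_assoc, hc1, one_mul]
  have hνp : ∀ n, IsProbabilityMeasure (ν n) := fun n => ⟨by
    rw [← Measure.fst_univ, hνf, measure_univ]⟩
  have hint : ∀ (g : (X × K) →ᵇ ℝ) n, ∫ p, g p ∂(ν n) =
      ((n : ℝ) + 1)⁻¹ * ∑ k ∈ Finset.range (n + 1), ∫ p, g p ∂(ρ k) := by
    intro g n
    simp only [ν]
    rw [integral_smul_measure, integral_finsetSum_measure]
    · simp only [c, smul_eq_mul]
      congr 1
      rw [ENNReal.toReal_inv, ENNReal.toReal_add (by finiteness) (by finiteness)]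
      simp
    · intro k _
      exact g.integrable _
  have hintF : ∀ (g : (X × K) →ᵇ ℝ) n, ∫ p, g (F p) ∂(ν n) =
      ((n : ℝ) + 1)⁻¹ * ∑ k ∈ Finset.range (n + 1), ∫ p, g p ∂(ρ (k + 1)) := by
    intro g n
    have e : ∀ k, ∫ p, g p ∂(ρ (k + 1)) = ∫ p, g (F p) ∂(ρ k) := fun k => by
      rw [← hρs, integral_map hFm.aemeasurable g.continuous.aestronglyMeasurable]
    simp only [ν, e]
    rw [integral_smul_measure, integral_finsetSum_measure]
    · simp only [c, smul_eq_mul]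
      congr 1
      rw [ENNReal.toReal_inv, ENNReal.toReal_add (by finiteness) (by finiteness)]
      simp
    · intro k _
      exact Integrable.of_bound
        (g.continuous.measurable.comp hFm).aestronglyMeasurable ‖g‖
        (ae_of_all _ fun p => g.norm_coe_le_norm _)
  have hten : ∀ g : (X × K) →ᵇ ℝ, Tendsto (fun n => ∫ p, g (F p) ∂(ν n) - ∫ p, g p ∂(ν n))
      atTop (𝓝 0) := by
    intro g
    have hbd : ∀ k, |∫ p, g p ∂(ρ k)| ≤ ‖g‖ := fun k => by
      have := g.norm_integral_le_norm (μ := ρ k)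
      simpa using this
    have hl : Tendsto (fun n : ℕ => ((n : ℝ) + 1)⁻¹ * (2 * ‖g‖)) atTop (𝓝 0) := by
      have := (tendsto_one_div_add_atTop_nhds_zero_nat (𝕜 := ℝ)).mul_const (2 * ‖g‖)
      simpa [one_div] using this
    refine squeeze_zero_norm (fun n => ?_) hl
    rw [hint, hintF, ← mul_sub, ← Finset.sum_sub_distrib,
      Finset.sum_range_sub (fun k => ∫ p, g p ∂(ρ k)), norm_mul]
    have h0 : (0 : ℝ) ≤ ((n : ℝ) + 1)⁻¹ := by positivity
    rw [Real.norm_of_nonneg h0]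
    refine mul_le_mul_of_nonneg_left ?_ h0
    refine (norm_sub_le _ _).trans ?_
    have := hbd (n + 1)
    have := hbd 0
    simp only [Real.norm_eq_abs]
    linarith
  obtain ⟨u, hu⟩ := TopologicalSpace.exists_dense_seq K
  obtain ⟨t', ht', hct, hP⟩ := Measurable.exists_continuous (α := X) (β := ℕ → K)
    (f := fun x j => G (x, u j)) (by fun_prop)
  have hB : @BorelSpace X t' _ := by
    refine @BorelSpace.mk X t' _ ?_
    have e := @borel_eq_borel_of_le X t' t hP ‹@PolishSpace X t› ht'
    rw [e]
    exact @BorelSpace.measurable_eq X t _ _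
  have hGc : @Continuous (X × K) K (@instTopologicalSpaceProd X K t' _) _ G := by
    let := t'
    have hj : ∀ j, @Continuous X K t' _ (fun x => G (x, u j)) := fun j => 
      (continuous_apply j).comp hct
    rw [@continuous_iff_continuousAt]
    rintro ⟨x, z⟩
    rw [@ContinuousAt, Metric.tendsto_nhds]
    intro ε hε
    obtain ⟨j, hj'⟩ := hu.exists_dist_lt z (show 0 < ε / 8 by linarith)
    have e1 : ∀ᶠ y in @nhds X t' x, dist (G (y, u j)) (G (x, u j)) < ε / 4 :=
      (Metric.tendsto_nhds.1 ((@continuous_iff_continuousAt X K t' _ _).1 (hj j) x)) (ε / 4) (by linarith)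
    have e2 : ∀ᶠ w in 𝓝 z, dist w z < ε / 4 := Metric.ball_mem_nhds z (by linarith)
    rw [@nhds_prod_eq X K t' _]
    filter_upwards [e1.prod_mk e2]
    rintro ⟨y, w⟩ ⟨h1, h2⟩
    have a1 := hLip y w (u j)
    have a2 := hLip x (u j) z
    have a3 := dist_triangle4 (G (y, w)) (G (y, u j)) (G (x, u j)) (G (x, z))
    have a4 := dist_triangle w z (u j)
    rw [dist_comm (u j) z] at a2
    simp only at h1 h2 ⊢
    linarith
  obtain ⟨μ, hμp, hμf, hμ⟩ := @exists_map_eq X X K t' hP _ hB t _ _ _ _ _ _ _ m _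
    (fun n => ⟨ν n, hνp n⟩) hνf id s (continuous_id_of_le ht')
    (continuous_le_dom ht' hs) G hGc (by
      intro g
      have := hten g
      rw [hF] at this
      exact this)
  refine ⟨μ, hμp, hμf, ?_⟩
  rw [hμ]
  exact Measure.map_id

/-- Uniqueness of the invariant measure with a given marginal. -/
theorem unique_invariant {X K : Type*} [TopologicalSpace X] [PolishSpace X] [CompactSpace X]
    [MeasurableSpace X]
    [BorelSpace X] [MetricSpace K] [CompactSpace K] [Nonempty K] [MeasurableSpace K] [BorelSpace K]
    (s : X → X) 
    (G : X × K → K) (hF : Measurable (fun p : X × K => (s p.1, G p)))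
    (α : ℝ) (hα0 : 0 < α) (hα1 : α < 1)
    (hLip : ∀ x z₁ z₂, dist (G (x, z₁)) (G (x, z₂)) ≤ α * dist z₁ z₂)
    (μ μ' : Measure (X × K)) [IsProbabilityMeasure μ] [IsProbabilityMeasure μ']
    (hμ : μ.map (fun p => (s p.1, G p)) = μ) (hμ' : μ'.map (fun p => (s p.1, G p)) = μ')
    (hf : μ.fst = μ'.fst) : μ = μ' := by
  obtain ⟨F, hFF⟩ : ∃ F : X × K → X × K, F = fun p => (s p.1, G p) := ⟨_, rfl⟩
  rw [← hFF] at hF hμ hμ'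
  obtain ⟨z₀⟩ := ‹Nonempty K›
  have hit : ∀ n x z₁ z₂, (F^[n] (x, z₁)).1 = (F^[n] (x, z₂)).1 ∧
      dist (F^[n] (x, z₁)).2 (F^[n] (x, z₂)).2 ≤ α ^ n * dist z₁ z₂ := by
    intro n x z₁ z₂
    induction n with
    | zero => simp
    | succ n ih =>
      simp only [Function.iterate_succ_apply']
      generalize F^[n] (x, z₁) = p at *
      generalize F^[n] (x, z₂) = q at *
      obtain ⟨a, b⟩ := p
      obtain ⟨a', b'⟩ := q
      obtain ⟨h1, h2⟩ := ih
      simp only at h1 h2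
      subst h1
      rw [hFF]
      refine ⟨rfl, (hLip _ _ _).trans ?_⟩
      rw [pow_succ', mul_assoc]
      exact mul_le_mul_of_nonneg_left h2 hα0.le
  apply ext_of_forall_integral_eq_of_IsFiniteMeasure
  intro g
  let := TopologicalSpace.metrizableSpaceMetric X
  have huc : UniformContinuous g := CompactSpace.uniformContinuous_of_continuous g.continuous
  let b : ℕ → ℝ := fun n => ∫ x, g (F^[n] (x, z₀)) ∂μ.fst
  have key : ∀ ρ : Measure (X × K), IsProbabilityMeasure ρ → ρ.map F = ρ → ρ.fst = μ.fst →
      Tendsto b atTop (𝓝 (∫ p, g p ∂ρ)) := by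
    intro ρ _ hρ hρf
    have hmi : ∀ n, Measurable (fun x : X => F^[n] (x, z₀)) := fun n =>
      (hF.iterate n).comp (by fun_prop)
    have hρn : ∀ n, ρ.map F^[n] = ρ := by
      intro n
      induction n with
      | zero => simp
      | succ n ih => rw [Function.iterate_succ, ← Measure.map_map (hF.iterate n) hF, hρ, ih]
    have e1 : ∀ n, ∫ p, g p ∂ρ = ∫ p, g (F^[n] p) ∂ρ := fun n => by
      conv_lhs => rw [← hρn n]
      rw [integral_map (hF.iterate n).aemeasurable g.continuous.aestronglyMeasurable]
    have e2 : ∀ n, b n = ∫ p, g (F^[n] (p.1, z₀)) ∂ρ := fun n => by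
      simp only [b]
      rw [← hρf, Measure.fst, integral_map measurable_fst.aemeasurable]
      exact (g.continuous.measurable.comp (hmi n)).aestronglyMeasurable
    have i1 : ∀ n, Integrable (fun p => g (F^[n] p)) ρ := fun n => Integrable.of_bound
        (g.continuous.measurable.comp (hF.iterate n)).aestronglyMeasurable ‖g‖
        (ae_of_all _ fun p => g.norm_coe_le_norm _)
    have i2 : ∀ n, Integrable (fun p : X × K => g (F^[n] (p.1, z₀))) ρ :=
      fun n => Integrable.of_bound
        (g.continuous.measurable.comp ((hmi n).comp measurable_fst)).aestronglyMeasurable ‖g‖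
        (ae_of_all _ fun p => g.norm_coe_le_norm _)
    rw [Metric.tendsto_atTop]
    intro ε hε
    obtain ⟨δ, hδ, hd⟩ := Metric.uniformContinuous_iff.1 huc (ε / 2) (by linarith)
    have hpow : Tendsto (fun n => α ^ n * Metric.diam (univ : Set K)) atTop (𝓝 0) := by
      simpa using (tendsto_pow_atTop_nhds_zero_of_lt_one hα0.le hα1).mul_const
        (Metric.diam (univ : Set K))
    obtain ⟨n₀, hn₀⟩ := (hpow.eventually (gt_mem_nhds hδ)).exists_forall_of_atTop
    refine ⟨n₀, fun n hn => ?_⟩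
    rw [e1 n, e2 n, dist_eq_norm, ← integral_sub (i2 n) (i1 n)]
    have : ∀ p : X × K, ‖g (F^[n] (p.1, z₀)) - g (F^[n] p)‖ ≤ ε / 2 := by
      rintro ⟨x, z⟩
      rw [← dist_eq_norm]
      refine (hd ?_).le
      obtain ⟨h1, h2⟩ := hit n x z₀ z
      rw [Prod.dist_eq, h1, dist_self]
      refine max_lt hδ (h2.trans_lt (lt_of_le_of_lt ?_ (hn₀ n hn)))
      exact mul_le_mul_of_nonneg_left (Metric.dist_le_diam_of_mem isCompact_univ.isBounded
        (mem_univ _) (mem_univ _)) (by positivity)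
    have h3 := norm_integral_le_of_norm_le_const (μ := ρ) (ae_of_all _ this)
    simp only [probReal_univ, mul_one] at h3
    linarith
  exact tendsto_nhds_unique (key μ ‹_› hμ rfl) (key μ' ‹_› hμ' hf.symm)
end General

section Base
open Filter Topology

theorem isClosed_sigma (N : ℕ) (A : Fin N → Fin N → Bool) :
    IsClosed {x : ℕ → Fin N | ∀ i, A (x i) (x (i + 1)) = true} := by
  rw [ofPred_forall]
  refine isClosed_iInter fun i => ?_
  have hc : Continuous (fun x : ℕ → Fin N => A (x i) (x (i + 1))) :=
    Continuous.comp (g := fun p : Fin N × Fin N => A p.1 p.2)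
      (f := fun x : ℕ → Fin N => (x i, x (i + 1))) continuous_of_discreteTopology
      ((continuous_apply i).prodMk (continuous_apply (i + 1)))
  exact isClosed_eq hc continuous_const

theorem sigma_compact (N : ℕ) (A : Fin N → Fin N → Bool) : CompactSpace (SigmaA N A) :=
  isCompact_iff_compactSpace.1 (isClosed_sigma N A).isCompact

theorem sigma_polish (N : ℕ) (A : Fin N → Fin N → Bool) : PolishSpace (SigmaA N A) :=
  have : PolishSpace (Fin N) := inferInstance
  have : PolishSpace (ℕ → Fin N) := inferInstance
  (isClosed_sigma N A).polishSpace

theorem sigma_borel (N : ℕ) (A : Fin N → Fin N → Bool) : BorelSpace (SigmaA N A) :=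
  inferInstance

theorem continuous_shift {N : ℕ} {A : Fin N → Fin N → Bool} :
    Continuous (shift : SigmaA N A → SigmaA N A) := by
  refine Continuous.subtype_mk ?_ _
  exact continuous_pi fun i => (continuous_apply (i + 1)).comp continuous_subtype_val

section dT

theorem dT_term_le {θ : ℝ} (hθ0 : 0 < θ) (hθ1 : θ < 1) (x y : SigmaA N A) (i : ℕ) :
    ‖θ ^ i * (if x.val i = y.val i then (0 : ℝ) else 1)‖ ≤ θ ^ i := by
  have : 0 < θ ^ i := by positivity
  split_ifs
  · simp [this.le]
  · rw [mul_one, Real.norm_of_nonneg this.le]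

theorem dT_summable {θ : ℝ} (hθ0 : 0 < θ) (hθ1 : θ < 1) (x y : SigmaA N A) :
    Summable (fun i => θ ^ i * (if x.val i = y.val i then (0 : ℝ) else 1)) :=
  Summable.of_norm_bounded (summable_geometric_of_lt_one hθ0.le hθ1) (dT_term_le hθ0 hθ1 x y)

theorem dT_nonneg {θ : ℝ} (hθ0 : 0 < θ) (hθ1 : θ < 1) (x y : SigmaA N A) : 0 ≤ dTheta θ x y :=
  tsum_nonneg fun i => mul_nonneg (by positivity) (by split_ifs <;> norm_num)

theorem dT_le {θ : ℝ} (hθ0 : 0 < θ) (hθ1 : θ < 1) (x y : SigmaA N A) : dTheta θ x y ≤ (1 - θ)⁻¹ := by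
  rw [← tsum_geometric_of_lt_one hθ0.le hθ1]
  refine (dT_summable hθ0 hθ1 x y).tsum_le_tsum (fun i => ?_)
    (summable_geometric_of_lt_one hθ0.le hθ1)
  exact (le_abs_self _).trans (dT_term_le hθ0 hθ1 x y i)

theorem dT_eq_zero {θ : ℝ} (hθ0 : 0 < θ) (hθ1 : θ < 1) (x y : SigmaA N A) (h : dTheta θ x y = 0) : x = y := by
  have h0 : ∀ i, 0 ≤ θ ^ i * (if x.val i = y.val i then (0 : ℝ) else 1) := fun i =>
    mul_nonneg (by positivity) (by split_ifs <;> norm_num)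
  have h1 := (hasSum_zero_iff_of_nonneg h0).1 (by
    have h2 := (dT_summable hθ0 hθ1 x y).hasSum
    have h3 : (∑' i, θ ^ i * (if x.val i = y.val i then (0 : ℝ) else 1)) = 0 := h
    rwa [h3] at h2)
  apply Subtype.ext
  funext i
  by_contra hne
  have := congrFun h1 i
  simp [hne, hθ0.ne'] at this

theorem dT_continuous {θ : ℝ} (hθ0 : 0 < θ) (hθ1 : θ < 1) (y : SigmaA N A) : Continuous (fun x => dTheta θ x y) := by
  refine continuous_tsum (fun i => ?_) (summable_geometric_of_lt_one hθ0.le hθ1)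
    (fun i x => dT_term_le hθ0 hθ1 x y i)
  refine continuous_const.mul ?_
  exact (continuous_of_discreteTopology (f := fun a : Fin N => if a = y.val i then (0:ℝ) else 1)).comp
    ((continuous_apply i).comp continuous_subtype_val)

theorem lipD_continuous {θ : ℝ} (hθ0 : 0 < θ) (hθ1 : θ < 1) {f : SigmaA N A → ℝ} (hf : LipD (dTheta θ) f) : Continuous f := by
  obtain ⟨L, hL⟩ := hf
  rw [continuous_iff_continuousAt]
  intro y
  rw [ContinuousAt, tendsto_iff_dist_tendsto_zero]
  have h0 : dTheta θ y y = 0 := by simp [dTheta]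
  have h1 : Tendsto (fun x => L * dTheta θ x y) (𝓝 y) (𝓝 0) := by
    have := ((dT_continuous hθ0 hθ1 y).const_mul L).tendsto y
    simpa only [h0, mul_zero] using this
  exact squeeze_zero (fun x => dist_nonneg) (fun x => by rw [Real.dist_eq]; exact hL x y) h1

theorem lipD_integrable {θ : ℝ} (hθ0 : 0 < θ) (hθ1 : θ < 1) {f : SigmaA N A → ℝ} (hf : LipD (dTheta θ) f)
    (m : Measure (SigmaA N A)) [IsFiniteMeasure m] : Integrable f m := by
  have := sigma_compact N A
  have hc := lipD_continuous hθ0 hθ1 hf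
  obtain ⟨C, hC⟩ := isCompact_univ.exists_bound_of_continuousOn hc.continuousOn
  exact Integrable.of_bound hc.aestronglyMeasurable C (ae_of_all _ fun x => hC x (mem_univ x))

theorem thetaNorm_lt_top {θ : ℝ} (hθ0 : 0 < θ) (hθ1 : θ < 1) {f : SigmaA N A → ℝ} (hf : LipD (dTheta θ) f) :
    thetaNorm (dTheta θ) f < ⊤ := by
  have := sigma_compact N A
  have hc := lipD_continuous hθ0 hθ1 hf
  obtain ⟨C, hC⟩ := isCompact_univ.exists_bound_of_continuousOn hc.continuousOn
  obtain ⟨L, hL⟩ := hf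
  refine ENNReal.add_lt_top.2 ⟨?_, ?_⟩
  · refine lt_of_le_of_lt (iSup_le fun x => ENNReal.ofReal_le_ofReal (hC x (mem_univ x)))
      ENNReal.ofReal_lt_top
  · refine lt_of_le_of_lt (iSup_le fun x => iSup_le fun y => ENNReal.ofReal_le_ofReal ?_)
      (ENNReal.ofReal_lt_top (r := |L|))
    have hd := dT_nonneg hθ0 hθ1 x y
    refine div_le_of_le_mul₀ hd (abs_nonneg L) ((hL x y).trans ?_)
    exact mul_le_mul_of_nonneg_right (le_abs_self L) hd

theorem lipD_of_thetaNorm {θ : ℝ} (hθ0 : 0 < θ) (hθ1 : θ < 1) {f : SigmaA N A → ℝ} (hf : thetaNorm (dTheta θ) f < ⊤) :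
    LipD (dTheta θ) f := by
  have h1 : lipConst (dTheta θ) f < ⊤ := (ENNReal.add_lt_top.1 hf).2
  refine ⟨(lipConst (dTheta θ) f).toReal, fun x y => ?_⟩
  rcases (dT_nonneg hθ0 hθ1 x y).eq_or_lt with h | h
  · have := dT_eq_zero hθ0 hθ1 x y h.symm
    subst this
    simp [← h]
  · rw [← div_le_iff₀ h]
    refine (ENNReal.ofReal_le_iff_le_toReal h1.ne).1 ?_
    exact le_iSup_of_le x (le_iSup_of_le y le_rfl)

/-- A Lipschitz, mean zero function invariant under `P_σ` (weakly) vanishes. -/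
theorem gap_zero {θ : ℝ} (hθ0 : 0 < θ) (hθ1 : θ < 1) (m : Measure (SigmaA N A)) [IsProbabilityMeasure m]
    (Pσ : (SigmaA N A → ℝ) → SigmaA N A → ℝ) (hPF : IsPerronFrobenius m Pσ)
    (D r : ℝ) (hr0 : 0 < r) (hr1 : r < 1) (hgap : HasGap m θ Pσ D r)
    (φ : SigmaA N A → ℝ) (hφ : LipD (dTheta θ) φ) (h0 : ∫ x, φ x ∂m = 0)
    (hinv : ∀ E : Set (SigmaA N A), MeasurableSet E →
      ∫ x in shift ⁻¹' E, φ x ∂m = ∫ x in E, φ x ∂m) : φ =ᵐ[m] 0 := by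
  have hsm : Measurable (shift : SigmaA N A → SigmaA N A) := continuous_shift.measurable
  have hfin : ∀ n, thetaNorm (dTheta θ) (Pσ^[n] φ) < ⊤ := fun n =>
    (hgap φ hφ h0 n).trans_lt (ENNReal.mul_lt_top ENNReal.ofReal_lt_top
      (thetaNorm_lt_top hθ0 hθ1 hφ))
  have hlip : ∀ n, LipD (dTheta θ) (Pσ^[n] φ) := fun n => lipD_of_thetaNorm hθ0 hθ1 (hfin n)
  have hae : ∀ n, Pσ^[n] φ =ᵐ[m] φ := by
    intro n
    induction n with
    | zero => simp
    | succ n ih =>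
      refine Integrable.ae_eq_of_forall_setIntegral_eq _ _
        (lipD_integrable hθ0 hθ1 (hlip _) m) (lipD_integrable hθ0 hθ1 hφ m) ?_
      intro E hE _
      rw [Function.iterate_succ_apply']
      have hd := hPF (Pσ^[n] φ) (E.indicator 1) (lipD_integrable hθ0 hθ1 (hlip n) m)
        (measurable_one.indicator hE)
        ⟨1, fun x => by by_cases h : x ∈ E <;> simp [h]⟩
      rw [← hinv E hE, ← integral_indicator hE, ← integral_indicator (hsm hE)]
      calc _ = ∫ x, Pσ (Pσ^[n] φ) x * E.indicator 1 x ∂m := by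
              congr 1; ext x; by_cases h : x ∈ E <;> simp [h]
        _ = _ := hd
        _ = _ := by
              apply integral_congr_ae
              filter_upwards [ih] with x hx
              by_cases h : shift x ∈ E
              · rw [indicator_of_mem h, indicator_of_mem (show x ∈ shift ⁻¹' E from h), hx]; simp
              · rw [indicator_of_notMem h, indicator_of_notMem (show x ∉ shift ⁻¹' E from h)]; simp
  have hall : ∀ᵐ x ∂m, ∀ n, Pσ^[n] φ x = φ x := ae_all_iff.2 hae
  have hlim : Tendsto (fun n : ℕ => ENNReal.ofReal (D * r ^ n) * thetaNorm (dTheta θ) φ)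
      atTop (𝓝 0) := by
    have h1 : Tendsto (fun n : ℕ => ENNReal.ofReal (D * r ^ n)) atTop (𝓝 0) := by
      have := (tendsto_pow_atTop_nhds_zero_of_lt_one hr0.le hr1).const_mul D
      rw [mul_zero] at this
      simpa using ENNReal.tendsto_ofReal this
    have := ENNReal.Tendsto.mul_const (b := thetaNorm (dTheta θ) φ) h1
      (Or.inr (thetaNorm_lt_top hθ0 hθ1 hφ).ne)
    simpa using this
  filter_upwards [hall] with x hx
  have hle : ∀ n, ENNReal.ofReal |φ x| ≤
      ENNReal.ofReal (D * r ^ n) * thetaNorm (dTheta θ) φ := by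
    intro n
    refine le_trans ?_ (hgap φ hφ h0 n)
    rw [← hx n]
    exact le_add_right (le_iSup (fun y => ENNReal.ofReal |Pσ^[n] φ y|) x)
  have := ge_of_tendsto' hlim hle
  simpa using this

/-- An invariant probability with Lipschitz density has density one. -/
theorem marginal_eq {θ : ℝ} (hθ0 : 0 < θ) (hθ1 : θ < 1) (m : Measure (SigmaA N A)) [IsProbabilityMeasure m]
    (hminv : m.map shift = m)
    (Pσ : (SigmaA N A → ℝ) → SigmaA N A → ℝ) (hPF : IsPerronFrobenius m Pσ)
    (D r : ℝ) (hr0 : 0 < r) (hr1 : r < 1) (hgap : HasGap m θ Pσ D r)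
    (η : Measure (SigmaA N A)) [IsProbabilityMeasure η] (hη : η.map shift = η) (hac : η ≪ m)
    (ψ : SigmaA N A → ℝ) (hψ : LipD (dTheta θ) ψ)
    (hψe : ψ =ᵐ[m] fun x => (η.rnDeriv m x).toReal) : η = m := by
  have hsm : Measurable (shift : SigmaA N A → SigmaA N A) := continuous_shift.measurable
  have hψi := lipD_integrable hθ0 hθ1 hψ m
  have hset : ∀ E : Set (SigmaA N A), MeasurableSet E → ∫ x in E, ψ x ∂m = η.real E := by
    intro E hE
    rw [← Measure.setIntegral_toReal_rnDeriv hac]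
    exact integral_congr_ae (ae_restrict_of_ae hψe)
  have hsetφ : ∀ E : Set (SigmaA N A), MeasurableSet E →
      ∫ x in E, (ψ x - 1) ∂m = η.real E - m.real E := by
    intro E hE
    rw [integral_sub hψi.integrableOn (integrable_const _).integrableOn, hset E hE]
    simp
  have hz := gap_zero hθ0 hθ1 m Pσ hPF D r hr0 hr1 hgap (fun x => ψ x - 1)
    (by
      obtain ⟨L, hL⟩ := hψ
      exact ⟨L, fun x y => by simpa using hL x y⟩)
    (by
      have := hsetφ univ MeasurableSet.univ
      simpa using this)
    (by
      intro E hE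
      rw [hsetφ _ (hsm hE), hsetφ E hE]
      congr 1
      · rw [Measure.real, ← Measure.map_apply hsm hE, hη]; rfl
      · rw [Measure.real, ← Measure.map_apply hsm hE, hminv]; rfl)
  ext E hE
  have h1 : ∫ x in E, (ψ x - 1) ∂m = 0 := by
    rw [integral_congr_ae (ae_restrict_of_ae hz)]
    simp
  rw [hsetφ E hE, sub_eq_zero] at h1
  exact (measureReal_eq_measureReal_iff).1 h1
end dT

theorem wDist_prob {K : Type*} [MetricSpace K] [MeasurableSpace K]
    (ν : Measure K) [IsProbabilityMeasure ν] : wDist ν 0 = 1 := by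
  apply le_antisymm
  · refine iSup_le fun g => ?_
    rw [← ENNReal.ofReal_one]
    apply ENNReal.ofReal_le_ofReal
    have := norm_integral_le_of_norm_le_const (μ := ν) (f := g.val) (C := 1) (ae_of_all _ g.2.2)
    simpa using this
  · refine le_iSup_of_le ⟨fun _ => 1, LipschitzWith.const' 1, by simp⟩ ?_
    simp

section Norms
variable {K : Type*} [MetricSpace K] [CompactSpace K] [Nonempty K]
    [MeasurableSpace K] [BorelSpace K]

theorem fiber_ae (m : Measure (SigmaA N A)) [IsProbabilityMeasure m]
    (μ : Measure (SigmaA N A × K)) [hp : IsProbabilityMeasure μ] (hf : μ.fst = m) :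
    ∀ᵐ γ ∂m, wDist (fiberR m μ γ) (fiberR m 0 γ) = 1 := by
  have h1 : μ.fst.rnDeriv m =ᵐ[m] 1 := by rw [hf]; exact Measure.rnDeriv_self m
  have h2 : (0 : Measure (SigmaA N A × K)).fst.rnDeriv m =ᵐ[m] 0 := by
    rw [Measure.fst_zero]; exact Measure.rnDeriv_zero m
  filter_upwards [h1, h2] with γ e1 e2
  have hfin : IsFiniteMeasure μ := inferInstance
  have hfin0 : IsFiniteMeasure (0 : Measure (SigmaA N A × K)) := inferInstance
  have a1 : fiberR m μ γ = μ.condKernel γ := by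
    unfold fiberR
    rw [dif_pos hfin, e1]
    simp
  have a2 : fiberR m (0 : Measure (SigmaA N A × K)) γ = 0 := by
    unfold fiberR
    rw [dif_pos hfin0, e2]
    simp
  rw [a1, a2]
  exact wDist_prob _

theorem infNorm_one (m : Measure (SigmaA N A)) [IsProbabilityMeasure m]
    (μ : Measure (SigmaA N A × K)) [IsProbabilityMeasure μ] (hf : μ.fst = m) :
    infNormPair m μ 0 = 1 := by
  unfold infNormPair
  rw [essSup_congr_ae (fiber_ae m μ hf)]
  exact essSup_const _ (IsProbabilityMeasure.ne_zero m)

theorem phi_ae (m : Measure (SigmaA N A)) [IsProbabilityMeasure m]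
    (μ : Measure (SigmaA N A × K)) :
    phiPair m μ 0 =ᵐ[m] fun γ => (μ.fst.rnDeriv m γ).toReal := by
  have h2 : (0 : Measure (SigmaA N A × K)).fst.rnDeriv m =ᵐ[m] 0 := by
    rw [Measure.fst_zero]; exact Measure.rnDeriv_zero m
  filter_upwards [h2] with γ e2
  simp only [phiPair, e2]
  simp

theorem phi_one (m : Measure (SigmaA N A)) [IsProbabilityMeasure m]
    (μ : Measure (SigmaA N A × K)) (hf : μ.fst = m) :
    (fun _ => (1 : ℝ)) =ᵐ[m] phiPair m μ 0 := by
  have h1 : μ.fst.rnDeriv m =ᵐ[m] 1 := by rw [hf]; exact Measure.rnDeriv_self m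
  filter_upwards [h1, phi_ae m μ] with γ e1 e2
  simp [e2, e1]

theorem thetaNormMu_one (m : Measure (SigmaA N A)) [IsProbabilityMeasure m] (θ : ℝ)
    (μ : Measure (SigmaA N A × K)) (hf : μ.fst = m) : thetaNormMu m θ μ 0 = 1 := by
  have h1 := phi_one m μ hf
  have hne : (ae m).NeBot := inferInstance
  apply le_antisymm
  · refine iInf_le_of_le ⟨_, h1⟩ ?_
    simp only [thetaNorm, supNormE, lipConst]
    simp
  · refine le_iInf fun ψ => ?_
    obtain ⟨x, hx⟩ := (ψ.2.trans h1.symm).exists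
    refine le_add_right (le_iSup_of_le x ?_)
    rw [hx]; simp
end Norms
end Base

/-- Under (G1) and the spectral gap of the Perron–Frobenius
operator of the base shift, `F` admits exactly one invariant probability
measure `μ₀` in `S^∞`; moreover `‖μ₀‖_∞ = 1` and `‖μ₀‖_{S^∞} = 2`. -/
theorem unique_invariant_measure_in_Sinfty
    (N : ℕ) (A : Fin N → Fin N → Bool) (hA : Aperiodic A)
    (θ : ℝ) (hθ0 : 0 < θ) (hθ1 : θ < 1)
    (m : Measure (SigmaA N A)) [IsProbabilityMeasure m]
    (hmM : IsMarkov m) (hminv : m.map shift = m)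
    {K : Type*} [MetricSpace K] [CompactSpace K] [Nonempty K]
    [MeasurableSpace K] [BorelSpace K]
    (hdiam : Metric.diam (Set.univ : Set K) = 1)
    (G : SigmaA N A × K → K) (hGm : Measurable (skew G))
    (α : ℝ) (hα0 : 0 < α) (hα1 : α < 1) (hG1 : CondG1 G α)
    (Pσ : (SigmaA N A → ℝ) → SigmaA N A → ℝ) (hPF : IsPerronFrobenius m Pσ)
    (D r : ℝ) (hD : 0 < D) (hr0 : 0 < r) (hr1 : r < 1)
    (hgap : HasGap m θ Pσ D r) :
    ∃ μ₀ : Measure (SigmaA N A × K),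
      (IsProbabilityMeasure μ₀ ∧ μ₀.map (skew G) = μ₀ ∧ MemSPair m θ μ₀ 0) ∧
      (∀ μ' : Measure (SigmaA N A × K),
        IsProbabilityMeasure μ' → μ'.map (skew G) = μ' → MemSPair m θ μ' 0 →
          μ' = μ₀) ∧
      infNormPair m μ₀ 0 = 1 ∧ sNormPair m θ μ₀ 0 = 2 := by
  have := sigma_compact N A
  have := sigma_polish N A
  have hsm : Measurable (shift : SigmaA N A → SigmaA N A) := continuous_shift.measurable
  have hGm' : Measurable G := measurable_snd.comp hGm
  obtain ⟨μ₀, hp, hf, hinv⟩ := exists_invariant m shift continuous_shift hminv G hGm'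
    (fun x z₁ z₂ => (hG1 x z₁ z₂).trans (mul_le_of_le_one_left dist_nonneg hα1.le))
  have hn1 := infNorm_one m μ₀ hf
  refine ⟨μ₀, ⟨hp, hinv, ⟨?_, ?_, inferInstance, inferInstance⟩, ?_, ?_⟩, ?_, hn1, ?_⟩
  · rw [hf]
  · rw [Measure.fst_zero]; exact Measure.AbsolutelyContinuous.zero m
  · rw [hn1]; exact ENNReal.one_lt_top
  · exact ⟨_, phi_one m μ₀ hf, 0, fun x y => by simp⟩
  · intro μ' hp' hinv' hS
    obtain ⟨⟨hac, -, -, -⟩, -, ψ, hψ, hL⟩ := hS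
    have hfi : μ'.fst.map shift = μ'.fst := by
      conv_rhs => rw [← hinv']
      rw [Measure.fst, Measure.fst, Measure.map_map hsm measurable_fst,
        Measure.map_map measurable_fst hGm]
      rfl
    have hfst : μ'.fst = m := marginal_eq hθ0 hθ1 m hminv Pσ hPF D r hr0 hr1 hgap μ'.fst hfi hac ψ
      hL (hψ.trans (phi_ae m μ'))
    exact unique_invariant shift G hGm α hα0 hα1 hG1 μ' μ₀ hinv' hinv (hfst.trans hf.symm)
  · unfold sNormPair
    rw [hn1, thetaNormMu_one m θ μ₀ hf]
    exact one_add_one_eq_two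

end RDS
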